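/- Theorem 1 (for the convolution-stride slicer): For every p ≥ 1, the convolution-stride sliced Wasserstein CSW-s_p is a pseudo-metric on the space of Borel probability measures on ℝ^{c×d×d} with finite p-th moments: for all such measures μ, ν, μ₁, μ₂, μ₃ one has CSW-s_p(μ,ν) ≥ 0, CSW-s_p(μ,μ) = 0, CSW-s_p(μ,ν) = CSW-s_p(ν,μ), and CSW-s_p(μ₁,μ₃) ≤ CSW-s_p(μ₁,μ₂) + CSW-s_p(μ₂,μ₃). -/

import Mathlib

open MeasureTheory ENNReal

noncomputable section

/-- The set of couplings (transport plans) between two measures. -/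
def couplings {E : Type*} [MeasurableSpace E] (μ ν : Measure E) : Set (Measure (E × E)) :=
  {π | π.map Prod.fst = μ ∧ π.map Prod.snd = ν}

/-- The Wasserstein distance of order `p`:
`W_p(μ,ν) = (inf over couplings π of ∫ dist(x,y)^p dπ)^(1/p)`. -/
noncomputable def wassersteinDist {E : Type*} [MeasurableSpace E] [PseudoMetricSpace E]
    (p : ℝ) (μ ν : Measure E) : ℝ :=
  (⨅ π ∈ couplings μ ν, ∫⁻ q : E × E, ENNReal.ofReal (dist q.1 q.2 ^ p) ∂π).toReal ^ (1 / p)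

/-- A measure has a finite `p`-th moment. -/
def FiniteMomentP {E : Type*} [MeasurableSpace E] [NormedAddCommGroup E] (p : ℝ)
    (μ : Measure E) : Prop :=
  ∫⁻ x, ENNReal.ofReal (‖x‖ ^ p) ∂μ < ⊤

/-- Stride-2 convolution of a `c' × (2m) × (2m)` tensor with a `c' × 2 × 2` kernel (one output
channel): `Y i j = ∑ h, ∑ i', ∑ j', X h (2i+i') (2j+j') * K h i' j'`. -/
def convStride2 {c' : ℕ} (m : ℕ) (X : Fin c' → Fin (2 * m) → Fin (2 * m) → ℝ)
    (K : Fin c' → Fin 2 → Fin 2 → ℝ) (i j : Fin m) : ℝ :=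
  ∑ h : Fin c', ∑ i' : Fin 2, ∑ j' : Fin 2,
    X h ⟨2 * i.1 + i'.1, by have h1 := i.isLt; have h2 := i'.isLt; omega⟩
        ⟨2 * j.1 + j'.1, by have h1 := j.isLt; have h2 := j'.isLt; omega⟩ * K h i' j'

/-- Iterated stride-2 convolutions with single-channel `1 × 2 × 2` kernels, going from
spatial size `2^k * a` down to size `a`; `Ks 0` is applied first. -/
def midConv (a : ℕ) : (k : ℕ) → (Fin k → Fin 1 → Fin 2 → Fin 2 → ℝ) →
    (Fin (2 ^ k * a) → Fin (2 ^ k * a) → ℝ) → Fin a → Fin a → ℝ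
  | 0, _, X, i, j => X (Fin.cast (by ring) i) (Fin.cast (by ring) j)
  | k + 1, Ks, X, i, j =>
      midConv a k (fun t => Ks t.succ)
        (convStride2 (2 ^ k * a)
          (fun _ r s => X (Fin.cast (by ring) r) (Fin.cast (by ring) s))
          (Ks 0)) i j

/-- The space of `c × d × d` images, with the Euclidean (ℓ2) norm. -/
abbrev TensorSpace (c d : ℕ) := EuclideanSpace ℝ (Fin c × Fin d × Fin d)

/-- The convolution-stride slicer `CS-s(·|K^(1),…,K^(N))` with `N = M + 2` kernels, on images of
size `c × d × d` where `d = 2^(M+1) * a`: a stride-2 convolution with the `c × 2 × 2` kernel `K1`,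
then `M` stride-2 convolutions with the `1 × 2 × 2` kernels `Ks`, then the inner product with the
`1 × a × a` kernel `KN`. -/
def CSs (c a M : ℕ) (K1 : Fin c → Fin 2 → Fin 2 → ℝ)
    (Ks : Fin M → Fin 1 → Fin 2 → Fin 2 → ℝ) (KN : Fin 1 → Fin a → Fin a → ℝ)
    (X : TensorSpace c (2 ^ (M + 1) * a)) : ℝ :=
  ∑ i : Fin a, ∑ j : Fin a,
    midConv a M Ks
      (convStride2 (2 ^ M * a)
        (fun h r s => X (h, Fin.cast (by ring) r, Fin.cast (by ring) s)) K1) i j * KN 0 i j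

/-- The uniform probability distribution on the unit sphere of `EuclideanSpace ℝ ι`. -/
noncomputable def sphereUniform (ι : Type*) [Fintype ι] :
    Measure (Metric.sphere (0 : EuclideanSpace ℝ ι) 1) :=
  ((volume : Measure (EuclideanSpace ℝ ι)).toSphere Set.univ)⁻¹ •
    (volume : Measure (EuclideanSpace ℝ ι)).toSphere

/-- Sample space for the random kernels of the convolution-stride slicer: one kernel in the unit
sphere of `ℝ^{c×2×2}`, `M` kernels in the unit sphere of `ℝ^{1×2×2}`, and one kernel in the unit
sphere of `ℝ^{1×a×a}`. -/
abbrev KernelOmega (c a M : ℕ) :=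
  Metric.sphere (0 : EuclideanSpace ℝ (Fin c × Fin 2 × Fin 2)) 1 ×
    (Fin M → Metric.sphere (0 : EuclideanSpace ℝ (Fin 1 × Fin 2 × Fin 2)) 1) ×
    Metric.sphere (0 : EuclideanSpace ℝ (Fin 1 × Fin a × Fin a)) 1

/-- The joint law of the random kernels: independent, each uniformly distributed on the unit
sphere of its kernel space. -/
noncomputable def kernelMeasure (c a M : ℕ) : Measure (KernelOmega c a M) :=
  (sphereUniform (Fin c × Fin 2 × Fin 2)).prod
    ((Measure.pi fun _ : Fin M => sphereUniform (Fin 1 × Fin 2 × Fin 2)).prod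
      (sphereUniform (Fin 1 × Fin a × Fin a)))

/-- View a point of `EuclideanSpace ℝ (α × β × γ)` as a curried kernel. -/
def curry3 {α β γ : Type*} (x : EuclideanSpace ℝ (α × β × γ)) : α → β → γ → ℝ :=
  fun h i j => x (h, i, j)

/-- The convolution-stride slicer associated with a sample of the random kernels. -/
noncomputable def slicerOf (c a M : ℕ) (ω : KernelOmega c a M) :
    TensorSpace c (2 ^ (M + 1) * a) → ℝ :=
  CSs c a M (curry3 (ω.1 : EuclideanSpace ℝ (Fin c × Fin 2 × Fin 2)))
    (fun t => curry3 (ω.2.1 t : EuclideanSpace ℝ (Fin 1 × Fin 2 × Fin 2)))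
    (curry3 (ω.2.2 : EuclideanSpace ℝ (Fin 1 × Fin a × Fin a)))

/-- The convolution-stride sliced Wasserstein distance of order `p`:
`CSW-s_p(μ,ν) = (E[W_p^p(CS-s(·|K)♯μ, CS-s(·|K)♯ν)])^(1/p)`, the expectation being over the
random kernels. -/
noncomputable def CSWs (c a M : ℕ) (p : ℝ)
    (μ ν : Measure (TensorSpace c (2 ^ (M + 1) * a))) : ℝ :=
  (∫ ω, wassersteinDist p (μ.map (slicerOf c a M ω)) (ν.map (slicerOf c a M ω)) ^ p
    ∂(kernelMeasure c a M)) ^ (1 / p)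

/-!
Two couplings with a common marginal can be glued, and Minkowski's inequality in `Lᵖ` of the glued
measure gives the triangle inequality for `W_p`. Comparing along the coupling `(L x, L' x)`, it
follows that `L ↦ W_p(L♯μ, L♯ν)` is Lipschitz for the operator norm, with constant
`‖id‖_{Lᵖ(μ)} + ‖id‖_{Lᵖ(ν)}`, and it vanishes at `L = 0`; hence for a random linear map in `Lᵖ(P)`
the sliced integrand is in `Lᵖ(P)`. Without this integrability the Bochner integral could be the
junk value `0`; with it, Minkowski's inequality in `Lᵖ(P)` gives the sliced triangle inequality.
The convolution-stride slicer is linear in the image and continuous in its kernels, which range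
over a compact space, so it is a bounded random linear form.
-/

section Couplings

variable {X Y Z : Type*} [MeasurableSpace X] [MeasurableSpace Y] [MeasurableSpace Z]

theorem map_swap_mem_couplings {μ ν : Measure X} {π : Measure (X × X)} (hπ : π ∈ couplings μ ν) :
    π.map Prod.swap ∈ couplings ν μ :=
  ⟨Measure.fst_map_swap.trans hπ.2, Measure.snd_map_swap.trans hπ.1⟩

theorem map_prodMk_mem_couplings {ρ : Measure X} {f g : X → Y} (hf : AEMeasurable f ρ)
    (hg : AEMeasurable g ρ) :
    ρ.map (fun x => (f x, g x)) ∈ couplings (ρ.map f) (ρ.map g) :=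
  ⟨Measure.fst_map_prodMk₀ hg, Measure.snd_map_prodMk₀ hf⟩

theorem isFiniteMeasure_of_mem_couplings {μ ν : Measure X} [IsFiniteMeasure μ]
    {π : Measure (X × X)} (hπ : π ∈ couplings μ ν) : IsFiniteMeasure π :=
  have : IsFiniteMeasure (π.map Prod.fst) := hπ.1 ▸ inferInstance
  Measure.isFiniteMeasure_of_map measurable_fst.aemeasurable

theorem exists_gluing_of_snd_eq_fst [StandardBorelSpace Z] {π : Measure (X × Y)}
    {π' : Measure (Y × Z)} [SFinite π] [IsFiniteMeasure π'] (h : π.snd = π'.fst) :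
    ∃ γ : Measure ((X × Y) × Z), γ.fst = π ∧ γ.map (fun q => (q.1.2, q.2)) = π' := by
  rcases isEmpty_or_nonempty Z with hZ | hZ
  · have hπ' : π' = 0 := Subsingleton.elim _ _
    have hπ : π = 0 := by
      rwa [hπ', Measure.fst_zero, Measure.snd, Measure.map_eq_zero_iff (by fun_prop)] at h
    exact ⟨0, by simp [hπ], by simp [hπ']⟩
  -- Under `γ` the first and third coordinates are conditionally independent given the second.
  refine ⟨π.compProd (π'.condKernel.comap Prod.snd measurable_snd),
    Measure.fst_compProd _ _, ?_⟩
  ext s hs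
  have hpr : Measurable fun q : (X × Y) × Z => (q.1.2, q.2) := by fun_prop
  calc (π.compProd (π'.condKernel.comap Prod.snd measurable_snd)).map (fun q => (q.1.2, q.2)) s
      = ∫⁻ q, π'.condKernel q.2 (Prod.mk q.2 ⁻¹' s) ∂π := by
        rw [Measure.map_apply hpr hs, Measure.compProd_apply (hpr hs)]; rfl
    _ = ∫⁻ y, π'.condKernel y (Prod.mk y ⁻¹' s) ∂π.snd :=
        (lintegral_map (ProbabilityTheory.Kernel.measurable_kernel_prodMk_left hs)
          measurable_snd).symm
    _ = π' s := by rw [h, ← Measure.compProd_apply hs, π'.disintegrate]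

end Couplings

/-- The Wasserstein distance with values in `ℝ≥0∞`. The cost of a coupling is expressed as an
`Lᵖ` seminorm of the distance, so that Minkowski's inequality applies to it; `p = ∞` is allowed. -/
def eWassersteinDist {E : Type*} [MeasurableSpace E] [PseudoEMetricSpace E]
    (p : ℝ≥0∞) (μ ν : Measure E) : ℝ≥0∞ :=
  ⨅ π ∈ couplings μ ν, eLpNorm (fun q : E × E => edist q.1 q.2) p π

section EWassersteinDist

variable {E : Type*} [MeasurableSpace E] [PseudoEMetricSpace E] {p : ℝ≥0∞}

theorem eWassersteinDist_comm (μ ν : Measure E) :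
    eWassersteinDist p μ ν = eWassersteinDist p ν μ := by
  have hle (μ ν : Measure E) : eWassersteinDist p μ ν ≤ eWassersteinDist p ν μ := by
    refine le_iInf₂ fun π hπ => (iInf₂_le _ (map_swap_mem_couplings hπ)).trans_eq ?_
    have hswap : MeasurableEmbedding (Prod.swap : E × E → E × E) :=
      MeasurableEquiv.prodComm.measurableEmbedding
    rw [hswap.eLpNorm_map_measure]
    simp only [Function.comp_def, Prod.fst_swap, Prod.snd_swap, edist_comm]
  exact (hle μ ν).antisymm (hle ν μ)

variable [SecondCountableTopology E] [OpensMeasurableSpace E]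

theorem eWassersteinDist_map_le_eLpNorm {X : Type*} [MeasurableSpace X] {ρ : Measure X}
    {f g : X → E} (hf : AEMeasurable f ρ) (hg : AEMeasurable g ρ) :
    eWassersteinDist p (ρ.map f) (ρ.map g) ≤ eLpNorm (fun x => edist (f x) (g x)) p ρ := by
  refine (iInf₂_le _ (map_prodMk_mem_couplings hf hg)).trans_eq ?_
  exact eLpNorm_map_measure measurable_edist.aestronglyMeasurable (hf.prodMk hg)

theorem eWassersteinDist_self (μ : Measure E) : eWassersteinDist p μ μ = 0 := by
  simpa using eWassersteinDist_map_le_eLpNorm (p := p) (aemeasurable_id (μ := μ)) aemeasurable_id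

theorem eWassersteinDist_le_eLpNorm_add_eLpNorm [StandardBorelSpace E] (hp : 1 ≤ p)
    {μ₁ μ₂ μ₃ : Measure E} {π π' : Measure (E × E)} [SFinite π] [IsFiniteMeasure π']
    (hπ : π ∈ couplings μ₁ μ₂) (hπ' : π' ∈ couplings μ₂ μ₃) :
    eWassersteinDist p μ₁ μ₃ ≤ eLpNorm (fun q : E × E => edist q.1 q.2) p π +
      eLpNorm (fun q : E × E => edist q.1 q.2) p π' := by
  obtain ⟨γ, rfl, rfl⟩ := exists_gluing_of_snd_eq_fst (hπ.2.trans hπ'.1.symm)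
  have hpr : Measurable fun q : (E × E) × E => (q.1.2, q.2) := by fun_prop
  have h₁ : γ.map (fun q => q.1.1) = μ₁ := by
    rw [← hπ.1]; exact (Measure.map_map measurable_fst measurable_fst).symm
  have h₃ : γ.map (fun q => q.2) = μ₃ := by
    rw [← hπ'.2]; exact (Measure.map_map measurable_snd hpr).symm
  calc eWassersteinDist p μ₁ μ₃
      ≤ eLpNorm (fun q : (E × E) × E => edist q.1.1 q.2) p γ := by
        rw [← h₁, ← h₃]
        exact eWassersteinDist_map_le_eLpNorm (by fun_prop) (by fun_prop)
    _ ≤ eLpNorm ((fun q : (E × E) × E => edist q.1.1 q.1.2) + fun q => edist q.1.2 q.2) p γ :=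
        eLpNorm_mono_enorm fun q => edist_triangle _ _ _
    _ ≤ eLpNorm (fun q : (E × E) × E => edist q.1.1 q.1.2) p γ +
          eLpNorm (fun q : (E × E) × E => edist q.1.2 q.2) p γ :=
        eLpNorm_add_le (by fun_prop) (by fun_prop) hp
    _ = _ := by
        rw [Measure.fst,
          eLpNorm_map_measure measurable_edist.aestronglyMeasurable measurable_fst.aemeasurable,
          eLpNorm_map_measure measurable_edist.aestronglyMeasurable hpr.aemeasurable]
        rfl

theorem eWassersteinDist_triangle [StandardBorelSpace E] (hp : 1 ≤ p)
    (μ₁ μ₂ μ₃ : Measure E) [IsFiniteMeasure μ₁] [IsFiniteMeasure μ₂] :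
    eWassersteinDist p μ₁ μ₃ ≤ eWassersteinDist p μ₁ μ₂ + eWassersteinDist p μ₂ μ₃ := by
  conv_rhs => simp only [eWassersteinDist, ENNReal.iInf_add, ENNReal.add_iInf]
  refine le_iInf₂ fun π' hπ' => le_iInf₂ fun π hπ => ?_
  have := isFiniteMeasure_of_mem_couplings hπ
  have := isFiniteMeasure_of_mem_couplings hπ'
  exact eWassersteinDist_le_eLpNorm_add_eLpNorm hp hπ hπ'

end EWassersteinDist

section EWassersteinDistNormed

variable {F : Type*} [NormedAddCommGroup F] [MeasurableSpace F] [OpensMeasurableSpace F]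
  [SecondCountableTopology F] {p : ℝ≥0∞}

theorem eWassersteinDist_dirac_zero_le (μ : Measure F) [IsProbabilityMeasure μ] :
    eWassersteinDist p μ (Measure.dirac 0) ≤ eLpNorm id p μ := by
  have h := eWassersteinDist_map_le_eLpNorm (p := p) (ρ := μ) (f := id) (g := fun _ => (0 : F))
    aemeasurable_id aemeasurable_const
  rw [← eLpNorm_enorm]
  simpa using h

theorem eWassersteinDist_ne_top [StandardBorelSpace F] (hp : 1 ≤ p) {μ ν : Measure F}
    [IsProbabilityMeasure μ] [IsProbabilityMeasure ν] (hμ : MemLp id p μ) (hν : MemLp id p ν) :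
    eWassersteinDist p μ ν ≠ ∞ := by
  refine ne_top_of_le_ne_top (ENNReal.add_ne_top.2 ⟨hμ.2.ne, hν.2.ne⟩) ?_
  calc eWassersteinDist p μ ν
      ≤ eWassersteinDist p μ (Measure.dirac 0) + eWassersteinDist p (Measure.dirac 0) ν :=
        eWassersteinDist_triangle hp _ _ _
    _ ≤ eLpNorm id p μ + eLpNorm id p ν := by
        rw [eWassersteinDist_comm _ ν]
        exact add_le_add (eWassersteinDist_dirac_zero_le μ) (eWassersteinDist_dirac_zero_le ν)

end EWassersteinDistNormed

section FiniteMoment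

variable {V : Type*} [NormedAddCommGroup V] [MeasurableSpace V] [OpensMeasurableSpace V]
  [SecondCountableTopology V] {p : ℝ} {μ : Measure V}

theorem finiteMomentP_iff_memLp_id (hp : 0 < p) :
    FiniteMomentP p μ ↔ MemLp id (ENNReal.ofReal p) μ := by
  have hid : AEStronglyMeasurable (id : V → V) μ := aestronglyMeasurable_id
  rw [MemLp, and_iff_right hid, eLpNorm_lt_top_iff_lintegral_rpow_enorm_lt_top (by simpa using hp)
    ENNReal.ofReal_ne_top, ENNReal.toReal_ofReal hp.le]
  simp only [FiniteMomentP, id, ← ofReal_norm,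
    ENNReal.ofReal_rpow_of_nonneg (norm_nonneg _) hp.le]

theorem FiniteMomentP.map_clm {𝕜 F : Type*} [NontriviallyNormedField 𝕜] [NormedSpace 𝕜 V]
    [NormedAddCommGroup F] [NormedSpace 𝕜 F] [MeasurableSpace F] [BorelSpace F]
    [SecondCountableTopology F] (hp : 0 < p) (hμ : FiniteMomentP p μ) (L : V →L[𝕜] F) :
    FiniteMomentP p (μ.map L) := by
  rw [finiteMomentP_iff_memLp_id hp,
    memLp_map_measure_iff aestronglyMeasurable_id L.measurable.aemeasurable]
  exact L.comp_memLp' ((finiteMomentP_iff_memLp_id hp).1 hμ)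

end FiniteMoment

section WassersteinDist

variable {E : Type*} [MeasurableSpace E] [PseudoMetricSpace E] {p : ℝ}

theorem wassersteinDist_eq_toReal (hp : 0 < p) (μ ν : Measure E) :
    wassersteinDist p μ ν = (eWassersteinDist (ENNReal.ofReal p) μ ν).toReal := by
  have hcost (π : Measure (E × E)) :
      eLpNorm (fun q : E × E => edist q.1 q.2) (ENNReal.ofReal p) π =
        (∫⁻ q, ENNReal.ofReal (dist q.1 q.2 ^ p) ∂π) ^ (1 / p) := by
    rw [eLpNorm_eq_lintegral_rpow_enorm_toReal (by simpa using hp) ENNReal.ofReal_ne_top,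
      ENNReal.toReal_ofReal hp.le]
    simp only [enorm_eq_self, edist_dist, ENNReal.ofReal_rpow_of_nonneg dist_nonneg hp.le]
  have hroot (x : ℝ≥0∞) : x ^ (1 / p) = ENNReal.orderIsoRpow (1 / p) (by positivity) x := rfl
  simp only [wassersteinDist, eWassersteinDist, ENNReal.toReal_rpow, hcost, hroot,
    OrderIso.map_iInf]

theorem wassersteinDist_nonneg (p : ℝ) (μ ν : Measure E) : 0 ≤ wassersteinDist p μ ν :=
  Real.rpow_nonneg ENNReal.toReal_nonneg _

theorem wassersteinDist_comm (hp : 0 < p) (μ ν : Measure E) :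
    wassersteinDist p μ ν = wassersteinDist p ν μ := by
  rw [wassersteinDist_eq_toReal hp, wassersteinDist_eq_toReal hp, eWassersteinDist_comm]

theorem wassersteinDist_self [SecondCountableTopology E] [OpensMeasurableSpace E] (hp : 0 < p)
    (μ : Measure E) : wassersteinDist p μ μ = 0 := by
  rw [wassersteinDist_eq_toReal hp, eWassersteinDist_self, ENNReal.toReal_zero]

theorem wassersteinDist_triangle {F : Type*} [NormedAddCommGroup F] [MeasurableSpace F]
    [OpensMeasurableSpace F] [SecondCountableTopology F] [StandardBorelSpace F] (hp : 1 ≤ p)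
    {μ₁ μ₂ μ₃ : Measure F} [IsProbabilityMeasure μ₁] [IsProbabilityMeasure μ₂]
    [IsProbabilityMeasure μ₃] (h₁ : FiniteMomentP p μ₁) (h₂ : FiniteMomentP p μ₂)
    (h₃ : FiniteMomentP p μ₃) :
    wassersteinDist p μ₁ μ₃ ≤ wassersteinDist p μ₁ μ₂ + wassersteinDist p μ₂ μ₃ := by
  have hp₀ : 0 < p := by linarith
  have hp₁ : 1 ≤ ENNReal.ofReal p := by simpa using hp
  rw [finiteMomentP_iff_memLp_id hp₀] at h₁ h₂ h₃
  have h₁₂ := eWassersteinDist_ne_top hp₁ h₁ h₂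
  have h₂₃ := eWassersteinDist_ne_top hp₁ h₂ h₃
  simp only [wassersteinDist_eq_toReal hp₀]
  exact ENNReal.toReal_le_add (eWassersteinDist_triangle hp₁ μ₁ μ₂ μ₃) h₁₂ h₂₃

end WassersteinDist

section LinearImages

variable {𝕜 V F : Type*} [NontriviallyNormedField 𝕜]
  [NormedAddCommGroup V] [NormedSpace 𝕜 V] [MeasurableSpace V] [OpensMeasurableSpace V]
  [NormedAddCommGroup F] [NormedSpace 𝕜 F] [MeasurableSpace F] [BorelSpace F]
  [SecondCountableTopology F]

theorem eWassersteinDist_map_clm_le (p : ℝ≥0∞) (μ : Measure V) (L L' : V →L[𝕜] F) :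
    eWassersteinDist p (μ.map L) (μ.map L') ≤ ‖L - L'‖ₑ * eLpNorm id p μ := by
  refine (eWassersteinDist_map_le_eLpNorm (by fun_prop) (by fun_prop)).trans ?_
  refine eLpNorm_le_mul_eLpNorm_of_ae_le_mul' (Filter.Eventually.of_forall fun x => ?_) p
  rw [enorm_eq_self, edist_eq_enorm_sub]
  exact (L - L').le_opENorm x

variable [SecondCountableTopology V] {p : ℝ} {μ ν : Measure V}

theorem wassersteinDist_map_clm_le (hp : 0 < p) (hμ : FiniteMomentP p μ) (L L' : V →L[𝕜] F) :
    wassersteinDist p (μ.map L) (μ.map L') ≤ lpNorm id (ENNReal.ofReal p) μ * ‖L - L'‖ := by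
  rw [finiteMomentP_iff_memLp_id hp] at hμ
  rw [wassersteinDist_eq_toReal hp, ← toReal_eLpNorm hμ.1, ← toReal_enorm (L - L'),
    ← ENNReal.toReal_mul, mul_comm]
  exact ENNReal.toReal_mono (ENNReal.mul_ne_top enorm_ne_top hμ.2.ne)
    (eWassersteinDist_map_clm_le _ μ L L')

theorem lipschitzWith_wassersteinDist_map_clm [StandardBorelSpace F] (hp : 1 ≤ p)
    [IsProbabilityMeasure μ] [IsProbabilityMeasure ν]
    (hμ : FiniteMomentP p μ) (hν : FiniteMomentP p ν) :
    LipschitzWith (lpNorm id (ENNReal.ofReal p) μ + lpNorm id (ENNReal.ofReal p) ν).toNNReal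
      fun L : V →L[𝕜] F => wassersteinDist p (μ.map L) (ν.map L) := by
  have hp₀ : 0 < p := by linarith
  refine LipschitzWith.of_le_add_mul' _ fun L L' => ?_
  have (K : V →L[𝕜] F) : IsProbabilityMeasure (μ.map K) :=
    Measure.isProbabilityMeasure_map K.measurable.aemeasurable
  have (K : V →L[𝕜] F) : IsProbabilityMeasure (ν.map K) :=
    Measure.isProbabilityMeasure_map K.measurable.aemeasurable
  have hμL := hμ.map_clm hp₀ (𝕜 := 𝕜) (F := F)
  have hνL := hν.map_clm hp₀ (𝕜 := 𝕜) (F := F)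
  calc wassersteinDist p (μ.map L) (ν.map L)
      ≤ wassersteinDist p (μ.map L) (μ.map L') + wassersteinDist p (μ.map L') (ν.map L) :=
        wassersteinDist_triangle hp (hμL L) (hμL L') (hνL L)
    _ ≤ wassersteinDist p (μ.map L) (μ.map L') + (wassersteinDist p (μ.map L') (ν.map L') +
          wassersteinDist p (ν.map L') (ν.map L)) := by
        gcongr
        exact wassersteinDist_triangle hp (hμL L') (hνL L') (hνL L)
    _ ≤ lpNorm id (ENNReal.ofReal p) μ * dist L L' + (wassersteinDist p (μ.map L') (ν.map L') +
          lpNorm id (ENNReal.ofReal p) ν * dist L L') := by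
        rw [wassersteinDist_comm hp₀ (ν.map L'), dist_eq_norm]
        gcongr
        · exact wassersteinDist_map_clm_le hp₀ hμ L L'
        · exact wassersteinDist_map_clm_le hp₀ hν L L'
    _ = _ := by ring

end LinearImages

/-- The sliced Wasserstein distance of order `p` associated with a random map `S ω`, `ω ∼ P`:
the `Lᵖ(P)` mean of the Wasserstein distances between the images under `S ω`. The map need not
be linear nor real-valued. -/
def slicedWassersteinDist {Ω V E : Type*} [MeasurableSpace Ω] [MeasurableSpace V]
    [MeasurableSpace E] [PseudoMetricSpace E] (p : ℝ) (P : Measure Ω) (S : Ω → V → E)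
    (μ ν : Measure V) : ℝ :=
  (∫ ω, wassersteinDist p (μ.map (S ω)) (ν.map (S ω)) ^ p ∂P) ^ (1 / p)

section SlicedWassersteinDist

variable {Ω V E : Type*} [MeasurableSpace Ω] [MeasurableSpace V] [MeasurableSpace E]
  [PseudoMetricSpace E] {p : ℝ} {P : Measure Ω} {S : Ω → V → E}

theorem slicedWassersteinDist_nonneg (p : ℝ) (P : Measure Ω) (S : Ω → V → E)
    (μ ν : Measure V) : 0 ≤ slicedWassersteinDist p P S μ ν :=
  Real.rpow_nonneg
    (integral_nonneg fun _ => Real.rpow_nonneg (wassersteinDist_nonneg _ _ _) _) _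

theorem slicedWassersteinDist_self [SecondCountableTopology E] [OpensMeasurableSpace E]
    (hp : 0 < p) (μ : Measure V) : slicedWassersteinDist p P S μ μ = 0 := by
  simp [slicedWassersteinDist, wassersteinDist_self hp, Real.zero_rpow, hp.ne']

theorem slicedWassersteinDist_comm (hp : 0 < p) (μ ν : Measure V) :
    slicedWassersteinDist p P S μ ν = slicedWassersteinDist p P S ν μ := by
  simp only [slicedWassersteinDist, wassersteinDist_comm hp (μ.map _)]

theorem slicedWassersteinDist_eq_lpNorm (hp : 0 < p) {μ ν : Measure V}
    (h : AEStronglyMeasurable (fun ω => wassersteinDist p (μ.map (S ω)) (ν.map (S ω))) P) :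
    slicedWassersteinDist p P S μ ν =
      lpNorm (fun ω => wassersteinDist p (μ.map (S ω)) (ν.map (S ω))) (ENNReal.ofReal p) P := by
  rw [lpNorm_eq_integral_norm_rpow_toReal (by simpa using hp) ENNReal.ofReal_ne_top h]
  simp only [slicedWassersteinDist, ENNReal.toReal_ofReal hp.le, one_div,
    Real.norm_of_nonneg (wassersteinDist_nonneg _ _ _)]

end SlicedWassersteinDist

section RandomLinearMaps

variable {Ω 𝕜 V F : Type*} [MeasurableSpace Ω] {P : Measure Ω} [NontriviallyNormedField 𝕜]
  [NormedAddCommGroup V] [NormedSpace 𝕜 V] [MeasurableSpace V] [OpensMeasurableSpace V]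
  [SecondCountableTopology V]
  [NormedAddCommGroup F] [NormedSpace 𝕜 F] [MeasurableSpace F] [BorelSpace F]
  [SecondCountableTopology F] [StandardBorelSpace F]
  {p : ℝ} {L : Ω → V →L[𝕜] F}

theorem memLp_wassersteinDist_map_clm (hp : 1 ≤ p) (hL : MemLp L (ENNReal.ofReal p) P)
    {μ ν : Measure V} [IsProbabilityMeasure μ] [IsProbabilityMeasure ν]
    (hμ : FiniteMomentP p μ) (hν : FiniteMomentP p ν) :
    MemLp (fun ω => wassersteinDist p (μ.map (L ω)) (ν.map (L ω))) (ENNReal.ofReal p) P := by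
  have hmap (ρ : Measure V) [IsProbabilityMeasure ρ] :
      ρ.map (0 : V →L[𝕜] F) = Measure.dirac 0 := by
    rw [FunLike.coe_zero, Pi.zero_def, Measure.map_const, measure_univ, one_smul]
  have hzero : wassersteinDist p (μ.map (0 : V →L[𝕜] F)) (ν.map (0 : V →L[𝕜] F)) = 0 := by
    rw [hmap, hmap, wassersteinDist_self (by linarith)]
  exact (lipschitzWith_wassersteinDist_map_clm hp hμ hν).comp_memLp hzero hL

theorem slicedWassersteinDist_triangle (hp : 1 ≤ p) (hL : MemLp L (ENNReal.ofReal p) P)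
    {μ₁ μ₂ μ₃ : Measure V} [IsProbabilityMeasure μ₁] [IsProbabilityMeasure μ₂]
    [IsProbabilityMeasure μ₃] (h₁ : FiniteMomentP p μ₁) (h₂ : FiniteMomentP p μ₂)
    (h₃ : FiniteMomentP p μ₃) :
    slicedWassersteinDist p P (fun ω => L ω) μ₁ μ₃ ≤
      slicedWassersteinDist p P (fun ω => L ω) μ₁ μ₂ +
        slicedWassersteinDist p P (fun ω => L ω) μ₂ μ₃ := by
  have hp₀ : 0 < p := by linarith
  have m₁₂ := memLp_wassersteinDist_map_clm hp hL h₁ h₂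
  have m₂₃ := memLp_wassersteinDist_map_clm hp hL h₂ h₃
  have m₁₃ := memLp_wassersteinDist_map_clm hp hL h₁ h₃
  rw [slicedWassersteinDist_eq_lpNorm hp₀ m₁₂.1, slicedWassersteinDist_eq_lpNorm hp₀ m₂₃.1,
    slicedWassersteinDist_eq_lpNorm hp₀ m₁₃.1]
  refine (lpNorm_mono_real (m₁₂.add m₂₃) fun ω => ?_).trans
    (lpNorm_add_le m₁₂ (by simpa using hp))
  have (μ : Measure V) [IsProbabilityMeasure μ] : IsProbabilityMeasure (μ.map (L ω)) :=
    Measure.isProbabilityMeasure_map (L ω).measurable.aemeasurable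
  rw [Real.norm_of_nonneg (wassersteinDist_nonneg _ _ _)]
  exact wassersteinDist_triangle hp (h₁.map_clm hp₀ _) (h₂.map_clm hp₀ _) (h₃.map_clm hp₀ _)

theorem csw_stride_pseudometric_general (hp : 1 ≤ p) (hL : MemLp L (ENNReal.ofReal p) P)
    (μ ν : Measure V) {μ₁ μ₂ μ₃ : Measure V} [IsProbabilityMeasure μ₁] [IsProbabilityMeasure μ₂]
    [IsProbabilityMeasure μ₃] (h₁ : FiniteMomentP p μ₁) (h₂ : FiniteMomentP p μ₂)
    (h₃ : FiniteMomentP p μ₃) :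
    0 ≤ slicedWassersteinDist p P (fun ω => L ω) μ ν ∧
      slicedWassersteinDist p P (fun ω => L ω) μ μ = 0 ∧
      slicedWassersteinDist p P (fun ω => L ω) μ ν =
        slicedWassersteinDist p P (fun ω => L ω) ν μ ∧
      slicedWassersteinDist p P (fun ω => L ω) μ₁ μ₃ ≤
        slicedWassersteinDist p P (fun ω => L ω) μ₁ μ₂ +
          slicedWassersteinDist p P (fun ω => L ω) μ₂ μ₃ :=
  have hp₀ : 0 < p := by linarith
  ⟨slicedWassersteinDist_nonneg _ _ _ _ _, slicedWassersteinDist_self hp₀ _,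
    slicedWassersteinDist_comm hp₀ _ _, slicedWassersteinDist_triangle hp hL h₁ h₂ h₃⟩

end RandomLinearMaps

section Slicer

theorem isLinearMap_convStride2 {c' : ℕ} (m : ℕ) (K : Fin c' → Fin 2 → Fin 2 → ℝ) :
    IsLinearMap ℝ fun X => convStride2 m X K where
  map_add X Y := by
    ext i j
    simp only [convStride2, Pi.add_apply, add_mul, Finset.sum_add_distrib]
  map_smul t X := by
    ext i j
    simp only [convStride2, Pi.smul_apply, smul_eq_mul, mul_assoc, Finset.mul_sum]

theorem midConv_succ (a k : ℕ) (Ks : Fin (k + 1) → Fin 1 → Fin 2 → Fin 2 → ℝ)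
    (X : Fin (2 ^ (k + 1) * a) → Fin (2 ^ (k + 1) * a) → ℝ) :
    midConv a (k + 1) Ks X =
      midConv a k (fun t => Ks t.succ) (convStride2 (2 ^ k * a)
        (fun _ r s => X (Fin.cast (by ring) r) (Fin.cast (by ring) s)) (Ks 0)) := by
  ext i j
  rw [midConv]

theorem isLinearMap_midConv (a k : ℕ) (Ks : Fin k → Fin 1 → Fin 2 → Fin 2 → ℝ) :
    IsLinearMap ℝ (midConv a k Ks) := by
  induction k with
  | zero => exact ⟨fun _ _ => rfl, fun _ _ => rfl⟩
  | succ k ih =>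
    have hcast : IsLinearMap ℝ fun (X : Fin (2 ^ (k + 1) * a) → Fin (2 ^ (k + 1) * a) → ℝ)
        (_ : Fin 1) (r s : Fin (2 * (2 ^ k * a))) =>
          X (Fin.cast (by ring) r) (Fin.cast (by ring) s) :=
      ⟨fun _ _ => rfl, fun _ _ => rfl⟩
    rw [funext (midConv_succ a k Ks)]
    exact (((ih fun t => Ks t.succ).mk' _).comp
      (((isLinearMap_convStride2 (2 ^ k * a) (Ks 0)).mk' _).comp (hcast.mk' _))).isLinear

theorem isLinearMap_CSs (c a M : ℕ) (K1 : Fin c → Fin 2 → Fin 2 → ℝ)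
    (Ks : Fin M → Fin 1 → Fin 2 → Fin 2 → ℝ) (KN : Fin 1 → Fin a → Fin a → ℝ) :
    IsLinearMap ℝ (CSs c a M K1 Ks KN) := by
  have hcast : IsLinearMap ℝ fun (X : TensorSpace c (2 ^ (M + 1) * a))
      (h : Fin c) (r s : Fin (2 * (2 ^ M * a))) =>
        X (h, Fin.cast (by ring) r, Fin.cast (by ring) s) :=
    ⟨fun _ _ => rfl, fun _ _ => rfl⟩
  have hsum : IsLinearMap ℝ fun Y : Fin a → Fin a → ℝ => ∑ i, ∑ j, Y i j * KN 0 i j :=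
    ⟨fun Y Z => by simp only [Pi.add_apply, add_mul, Finset.sum_add_distrib],
      fun t Y => by simp only [Pi.smul_apply, smul_eq_mul, mul_assoc, Finset.mul_sum]⟩
  exact ((hsum.mk' _).comp (((isLinearMap_midConv a M Ks).mk' _).comp
    (((isLinearMap_convStride2 (2 ^ M * a) K1).mk' _).comp (hcast.mk' _)))).isLinear

theorem continuous_convStride2 {Ω : Type*} [TopologicalSpace Ω] {c' m : ℕ}
    {X : Ω → Fin c' → Fin (2 * m) → Fin (2 * m) → ℝ} {K : Ω → Fin c' → Fin 2 → Fin 2 → ℝ}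
    (hX : Continuous X) (hK : Continuous K) :
    Continuous fun ω => convStride2 m (X ω) (K ω) := by
  unfold convStride2
  fun_prop

theorem continuous_midConv {Ω : Type*} [TopologicalSpace Ω] {a k : ℕ}
    {Ks : Ω → Fin k → Fin 1 → Fin 2 → Fin 2 → ℝ}
    {X : Ω → Fin (2 ^ k * a) → Fin (2 ^ k * a) → ℝ}
    (hK : Continuous Ks) (hX : Continuous X) :
    Continuous fun ω => midConv a k (Ks ω) (X ω) := by
  induction k with
  | zero => simp only [midConv]; fun_prop
  | succ k ih =>
    have h := ih (Ks := fun ω t => Ks ω t.succ) (by fun_prop)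
      (continuous_convStride2 (m := 2 ^ k * a)
        (X := fun ω (_ : Fin 1) r s => X ω (Fin.cast (by ring) r) (Fin.cast (by ring) s))
        (K := fun ω => Ks ω 0) (by fun_prop) (by fun_prop))
    exact h

/-- The convolution-stride slicer as a continuous linear functional of the image. -/
def slicerCLM (c a M : ℕ) (ω : KernelOmega c a M) :
    TensorSpace c (2 ^ (M + 1) * a) →L[ℝ] ℝ :=
  LinearMap.toContinuousLinearMap ((isLinearMap_CSs c a M _ _ _).mk' (slicerOf c a M ω))

@[simp]
theorem coe_slicerCLM (c a M : ℕ) (ω : KernelOmega c a M) :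
    ⇑(slicerCLM c a M ω) = slicerOf c a M ω := rfl

theorem continuous_slicerCLM (c a M : ℕ) : Continuous (slicerCLM c a M) := by
  refine continuous_clm_apply.2 fun X => ?_
  simp only [coe_slicerCLM, slicerOf, CSs]
  have h₁ : Continuous fun ω : KernelOmega c a M => curry3 ω.1.1 := by
    unfold curry3; fun_prop
  have h₂ : Continuous fun (ω : KernelOmega c a M) (t : Fin M) => curry3 (ω.2.1 t).1 := by
    unfold curry3; fun_prop
  have h₃ : Continuous fun ω : KernelOmega c a M => curry3 ω.2.2.1 := by
    unfold curry3; fun_prop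
  have h := continuous_midConv h₂ (continuous_convStride2 (m := 2 ^ M * a)
    (X := fun _ h r s => X (h, Fin.cast (by ring) r, Fin.cast (by ring) s)) continuous_const h₁)
  fun_prop

instance isFiniteMeasure_sphereUniform (ι : Type*) [Fintype ι] :
    IsFiniteMeasure (sphereUniform ι) := by
  refine ⟨?_⟩
  rw [sphereUniform, Measure.smul_apply, smul_eq_mul]
  exact (ENNReal.inv_mul_le_one _).trans_lt ENNReal.one_lt_top

instance isFiniteMeasure_kernelMeasure (c a M : ℕ) : IsFiniteMeasure (kernelMeasure c a M) := by
  unfold kernelMeasure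
  infer_instance

theorem memLp_slicerCLM (c a M : ℕ) (p : ℝ≥0∞) :
    MemLp (slicerCLM c a M) p (kernelMeasure c a M) :=
  (continuous_slicerCLM c a M).memLp_of_hasCompactSupport (.of_compactSpace _)

end Slicer

/-- Theorem 1 (for the convolution-stride slicer): for every `p ≥ 1`, the convolution-stride
sliced Wasserstein `CSW-s_p` is a pseudo-metric on the space of Borel probability measures on
`ℝ^{c×d×d}` (with `d = 2^(M+1)·a`, i.e. `N = M + 2 ≥ 2`) with finite `p`-th moments:
it is nonnegative, vanishes on the diagonal, is symmetric, and satisfies the triangle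
inequality. -/
theorem csw_stride_pseudometric (c a M : ℕ) (hc : 1 ≤ c) (ha : 1 ≤ a)
    (p : ℝ) (hp : 1 ≤ p)
    (μ ν μ₁ μ₂ μ₃ : Measure (TensorSpace c (2 ^ (M + 1) * a)))
    [IsProbabilityMeasure μ] [IsProbabilityMeasure ν] [IsProbabilityMeasure μ₁]
    [IsProbabilityMeasure μ₂] [IsProbabilityMeasure μ₃]
    (hμ : FiniteMomentP p μ) (hν : FiniteMomentP p ν) (h₁ : FiniteMomentP p μ₁)
    (h₂ : FiniteMomentP p μ₂) (h₃ : FiniteMomentP p μ₃) :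
    0 ≤ CSWs c a M p μ ν ∧ CSWs c a M p μ μ = 0 ∧
      CSWs c a M p μ ν = CSWs c a M p ν μ ∧
      CSWs c a M p μ₁ μ₃ ≤ CSWs c a M p μ₁ μ₂ + CSWs c a M p μ₂ μ₃ := by
  exact csw_stride_pseudometric_general hp (memLp_slicerCLM c a M _) μ ν h₁ h₂ h₃

end
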